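/- There exists a constant C ≥ 0 (depending only on v, μ, σ, d and the point (t,x)) such that for every Δt ∈ (0,1], the variance of the antithetic single-step residual error satisfies Var(ε(Δt)) ≤ C. -/

import Mathlib

open MeasureTheory ProbabilityTheory Matrix

/-- Law of a random vector in `ℝ^d` whose coordinates are i.i.d. centered Gaussian
with variance `s` (i.e. `N(0, s·I_d)`). -/
noncomputable def gaussPi (d : ℕ) (s : ℝ) : Measure (Fin d → ℝ) :=
  Measure.pi fun _ => gaussianReal 0 s.toNNReal

/-- Time partial derivative `∂_t v (t, x)`. -/
noncomputable def partialT {d : ℕ} (v : ℝ → (Fin d → ℝ) → ℝ) (t : ℝ) (x : Fin d → ℝ) : ℝ :=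
  deriv (fun s => v s x) t

/-- Spatial gradient `∇_x v (t, x)`. -/
noncomputable def spatialGrad {d : ℕ} (v : ℝ → (Fin d → ℝ) → ℝ) (t : ℝ) (x : Fin d → ℝ) :
    Fin d → ℝ :=
  fun i => fderiv ℝ (v t) x (Pi.single i 1)

/-- Spatial Hessian `∇²_x v (t, x)` as a matrix. -/
noncomputable def spatialHess {d : ℕ} (v : ℝ → (Fin d → ℝ) → ℝ) (t : ℝ) (x : Fin d → ℝ) :
    Matrix (Fin d) (Fin d) ℝ :=
  Matrix.of fun i j =>
    fderiv ℝ (fun y => fderiv ℝ (v t) y (Pi.single j 1)) x (Pi.single i 1)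

/-- The antithetic single-step residual error `ε(Δt)` as a function of the Gaussian
increment `η`:
`ε = (v(t+Δt,x⁺) + v(t+Δt,x⁻) − 2v(t,x))/(2Δt) − (∂_t v + ½Tr[σσᵀ∇²v] + μ·∇v)` with
`x⁺ = x + μΔt + ση`, `x⁻ = x + μΔt − ση`. -/
noncomputable def resErr {d : ℕ} (v : ℝ → (Fin d → ℝ) → ℝ) (μv : Fin d → ℝ)
    (σ : Matrix (Fin d) (Fin d) ℝ) (t : ℝ) (x : Fin d → ℝ) (Δt : ℝ) (η : Fin d → ℝ) : ℝ :=
  (v (t + Δt) (x + Δt • μv + σ.mulVec η) + v (t + Δt) (x + Δt • μv - σ.mulVec η) - 2 * v t x)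
      / (2 * Δt)
    - (partialT v t x + (1 / 2) * (σ * σᵀ * spatialHess v t x).trace + μv ⬝ᵥ spatialGrad v t x)

/-- A function whose derivative is `K`-Lipschitz has second differences of size `2K‖h‖²`. -/
theorem abs_second_difference_le {E : Type*} [NormedAddCommGroup E] [NormedSpace ℝ E]
    {w : E → ℝ} (hw : Differentiable ℝ w) {K : ℝ}
    (hK : ∀ p q, ‖fderiv ℝ w p - fderiv ℝ w q‖ ≤ K * ‖p - q‖) (p h : E) :
    |w (p + h) + w (p - h) - 2 * w p| ≤ 2 * K * ‖h‖ ^ 2 := by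
  by_cases hh : h = 0
  · subst hh
    simp [two_mul]
  have hpos : 0 < ‖h‖ := norm_pos_iff.mpr hh
  have hK0 : 0 ≤ K := by
    have := (norm_nonneg _).trans (hK h 0)
    rw [sub_zero] at this
    exact nonneg_of_mul_nonneg_left this hpos
  have hder : ∀ y, HasFDerivAt (fun y => w (p + y) + w (p - y))
      (fderiv ℝ w (p + y) - fderiv ℝ w (p - y)) y := fun y => by
    have h1 : HasFDerivAt (fun y => w (p + y)) (fderiv ℝ w (p + y)) y :=
      (hw (p + y)).hasFDerivAt.comp y ((hasFDerivAt_id y).const_add p)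
    have h2 : HasFDerivAt (fun y => w (p - y)) (-fderiv ℝ w (p - y)) y := by
      have h := (hw (p - y)).hasFDerivAt.comp y ((hasFDerivAt_id y).const_sub p)
      rwa [ContinuousLinearMap.comp_neg, ContinuousLinearMap.comp_id] at h
    rw [sub_eq_add_neg (fderiv ℝ w (p + y))]
    exact h1.add h2
  have key := (convex_closedBall (0 : E) ‖h‖).norm_image_sub_le_of_norm_hasFDerivWithin_le
    (f := fun y => w (p + y) + w (p - y)) (C := K * (2 * ‖h‖)) (x := 0) (y := h)
    (fun y _ => (hder y).hasFDerivWithinAt)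
    (fun y hy => by
      refine (hK _ _).trans (mul_le_mul_of_nonneg_left ?_ hK0)
      have hy' : ‖y‖ ≤ ‖h‖ := by simpa using hy
      have : p + y - (p - y) = (2 : ℝ) • y := by rw [two_smul]; abel
      rw [this, norm_smul, Real.norm_ofNat]
      linarith)
    (by simp) (by simp)
  simp only [add_zero, sub_zero, Real.norm_eq_abs] at key
  calc _ = |w (p + h) + w (p - h) - (w p + w p)| := by rw [two_mul]
    _ ≤ _ := key
    _ = _ := by ring

theorem integrable_pow_four_gaussianReal (s : NNReal) :
    Integrable (fun y : ℝ => y ^ 4) (gaussianReal 0 s) := by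
  have := (memLp_id_gaussianReal (μ := 0) (v := s) 4).integrable_norm_pow (by norm_num)
  simpa [Even.pow_abs (show Even 4 by decide)] using this

/-- Scaling of the fourth moment of a centered Gaussian. -/
theorem integral_pow_four_gaussianReal (s : NNReal) :
    ∫ y, y ^ 4 ∂gaussianReal 0 s = (s : ℝ) ^ 2 * ∫ y, y ^ 4 ∂gaussianReal 0 1 := by
  have hmap : gaussianReal 0 s = (gaussianReal 0 1).map (√(s : ℝ) * ·) := by
    rw [gaussianReal_map_const_mul]
    congr 1
    · simp
    · ext
      simp
  rw [hmap, integral_map (by fun_prop) (by fun_prop), ← integral_const_mul]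
  congr 1 with y
  rw [mul_pow, show √(s : ℝ) ^ 4 = (√(s : ℝ) ^ 2) ^ 2 by ring, Real.sq_sqrt s.coe_nonneg]

instance isProbabilityMeasure_gaussPi (d : ℕ) (s : ℝ) : IsProbabilityMeasure (gaussPi d s) := by
  unfold gaussPi
  infer_instance

theorem integrable_eval_pow_four_gaussPi (d : ℕ) (s : ℝ) (i : Fin d) :
    Integrable (fun η : Fin d → ℝ => η i ^ 4) (gaussPi d s) :=
  (measurePreserving_eval (fun _ : Fin d => gaussianReal 0 s.toNNReal)
    i).integrable_comp_of_integrable (integrable_pow_four_gaussianReal s.toNNReal)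

theorem integral_eval_pow_four_gaussPi (d : ℕ) {s : ℝ} (hs : 0 ≤ s) (i : Fin d) :
    ∫ η, η i ^ 4 ∂gaussPi d s = s ^ 2 * ∫ y, y ^ 4 ∂gaussianReal 0 1 := by
  have hmp := measurePreserving_eval (fun _ : Fin d => gaussianReal 0 s.toNNReal) i
  have h := integral_map (μ := gaussPi d s) (φ := Function.eval i)
    hmp.measurable.aemeasurable (f := fun y : ℝ => y ^ 4) (by fun_prop)
  rw [gaussPi, hmp.map_eq, integral_pow_four_gaussianReal, Real.coe_toNNReal s hs] at h
  exact h.symm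

/-- The sup norm on `Fin d → ℝ` satisfies `‖η‖⁴ ≤ ∑ ηᵢ⁴`. -/
theorem norm_pow_four_le_sum {d : ℕ} (hd : 1 ≤ d) (η : Fin d → ℝ) :
    ‖η‖ ^ 4 ≤ ∑ i, η i ^ 4 := by
  have : Nonempty (Fin d) := ⟨⟨0, hd⟩⟩
  obtain ⟨i, hi⟩ := Finite.exists_max fun i => ‖η i‖
  have h1 : ‖η‖ ≤ ‖η i‖ := (pi_norm_le_iff_of_nonneg (norm_nonneg _)).mpr hi
  calc ‖η‖ ^ 4 ≤ ‖η i‖ ^ 4 := by gcongr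
    _ = η i ^ 4 := by rw [Real.norm_eq_abs, Even.pow_abs (by decide)]
    _ ≤ _ := Finset.single_le_sum (f := fun i => η i ^ 4)
      (fun j _ => Even.pow_nonneg (by decide) _) (Finset.mem_univ i)

/-- The variance under `gaussPi` of a quantity of size `A + K‖η‖²/s` is bounded
uniformly in the scale `s`. -/
theorem variance_gaussPi_le {d : ℕ} (hd : 1 ≤ d) {s A K : ℝ} (hs : 0 < s)
    {X : (Fin d → ℝ) → ℝ} (hX : AEStronglyMeasurable X (gaussPi d s))
    (hbd : ∀ η, |X η| ≤ A + K * ‖η‖ ^ 2 / s) :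
    variance X (gaussPi d s)
      ≤ 2 * A ^ 2 + 2 * K ^ 2 * (d * ∫ y, y ^ 4 ∂gaussianReal 0 1) := by
  have hint : Integrable (fun η : Fin d → ℝ => ∑ i, η i ^ 4) (gaussPi d s) :=
    integrable_finsetSum _ fun i _ => integrable_eval_pow_four_gaussPi d s i
  calc variance X (gaussPi d s) ≤ ∫ η, (X ^ 2) η ∂gaussPi d s := variance_le_expectation_sq hX
    _ ≤ ∫ η, (2 * A ^ 2 + 2 * K ^ 2 / s ^ 2 * ∑ i, η i ^ 4) ∂gaussPi d s := by
      refine integral_mono_of_nonneg (.of_forall fun η => sq_nonneg _)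
        ((integrable_const _).add (hint.const_mul _)) (.of_forall fun η => ?_)
      calc X η ^ 2 ≤ (A + K * ‖η‖ ^ 2 / s) ^ 2 :=
          sq_le_sq' (abs_le.mp (hbd η)).1 (abs_le.mp (hbd η)).2
        _ ≤ 2 * A ^ 2 + 2 * (K * ‖η‖ ^ 2 / s) ^ 2 := by
          nlinarith [sq_nonneg (A - K * ‖η‖ ^ 2 / s)]
        _ = 2 * A ^ 2 + 2 * K ^ 2 / s ^ 2 * ‖η‖ ^ 4 := by ring
        _ ≤ 2 * A ^ 2 + 2 * K ^ 2 / s ^ 2 * ∑ i, η i ^ 4 := by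
          gcongr
          exact norm_pow_four_le_sum hd η
    _ = _ := by
      rw [integral_add (integrable_const _) (hint.const_mul _),
        integral_const_mul (2 * K ^ 2 / s ^ 2),
        integral_finsetSum _ fun i _ => integrable_eval_pow_four_gaussPi d s i]
      simp only [integral_eval_pow_four_gaussPi d hs.le, integral_const, probReal_univ,
        Finset.sum_const, Finset.card_univ, Fintype.card_fin, nsmul_eq_mul, one_smul]
      field_simp

/-- There exists `C ≥ 0` such that for every `Δt ∈ (0,1]`, `Var(ε(Δt)) ≤ C`. -/
theorem stmt1 {d : ℕ} (hd : 1 ≤ d) (t : ℝ) (x μv : Fin d → ℝ) (σ : Matrix (Fin d) (Fin d) ℝ)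
    (v : ℝ → (Fin d → ℝ) → ℝ) (hv : ContDiff ℝ 4 (Function.uncurry v))
    (hbd : ∀ i : ℕ, i ≤ 4 → ∃ B : ℝ, ∀ p : ℝ × (Fin d → ℝ),
      ‖iteratedFDeriv ℝ i (Function.uncurry v) p‖ ≤ B) :
    ∃ C : ℝ, 0 ≤ C ∧ ∀ Δt : ℝ, 0 < Δt → Δt ≤ 1 →
      variance (resErr v μv σ t x Δt) (gaussPi d Δt) ≤ C := by
  obtain ⟨L, hL⟩ := hbd 1 (by norm_num)
  obtain ⟨K, hK⟩ := hbd 2 (by norm_num)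
  set w := Function.uncurry v with hw
  have hL0 : 0 ≤ L := (norm_nonneg _).trans (hL 0)
  have hK0 : 0 ≤ K := (norm_nonneg _).trans (hK 0)
  have hdiff : Differentiable ℝ w := hv.differentiable (by norm_num)
  have hdiff' : Differentiable ℝ (fderiv ℝ w) :=
    (hv.fderiv_right (m := 1) (by norm_num)).differentiable (by norm_num)
  have hL' : ∀ p, ‖fderiv ℝ w p‖ ≤ L := fun p => by
    simpa [← norm_iteratedFDeriv_fderiv] using hL p
  have hK' : ∀ p, ‖fderiv ℝ (fderiv ℝ w) p‖ ≤ K := fun p => by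
    have h := hK p
    rwa [← norm_iteratedFDeriv_fderiv, ← norm_iteratedFDeriv_fderiv,
      norm_iteratedFDeriv_zero] at h
  have hlip : ∀ p q, ‖w p - w q‖ ≤ L * ‖p - q‖ := fun p q =>
    convex_univ.norm_image_sub_le_of_norm_fderiv_le (fun y _ => hdiff y) (fun y _ => hL' y)
      (Set.mem_univ q) (Set.mem_univ p)
  have hlip' : ∀ p q, ‖fderiv ℝ w p - fderiv ℝ w q‖ ≤ K * ‖p - q‖ := fun p q =>
    convex_univ.norm_image_sub_le_of_norm_fderiv_le (fun y _ => hdiff' y) (fun y _ => hK' y)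
      (Set.mem_univ q) (Set.mem_univ p)
  set c := partialT v t x + (1 / 2) * (σ * σᵀ * spatialHess v t x).trace
    + μv ⬝ᵥ spatialGrad v t x
  set S := ‖LinearMap.toContinuousLinearMap σ.mulVecLin‖
  have hS : ∀ η, ‖σ.mulVec η‖ ≤ S * ‖η‖ := fun η =>
    (LinearMap.toContinuousLinearMap σ.mulVecLin).le_opNorm η
  have hM : 0 ≤ ∫ y : ℝ, y ^ 4 ∂gaussianReal 0 1 :=
    integral_nonneg fun y => Even.pow_nonneg (by decide) y
  refine ⟨2 * (L * ‖((1 : ℝ), μv)‖ + |c|) ^ 2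
    + 2 * (K * S ^ 2) ^ 2 * (d * ∫ y, y ^ 4 ∂gaussianReal 0 1), by positivity,
    fun Δt hpos _ => variance_gaussPi_le hd hpos ?_ fun η => ?_⟩
  · have hcont : Continuous (resErr v μv σ t x Δt) := by
      have hwc : Continuous fun p : ℝ × (Fin d → ℝ) => v p.1 p.2 := hdiff.continuous
      have h1 : Continuous fun η => v (t + Δt) (x + Δt • μv + σ.mulVec η) :=
        hwc.comp (f := fun η => (t + Δt, x + Δt • μv + σ.mulVec η)) (by fun_prop)
      have h2 : Continuous fun η => v (t + Δt) (x + Δt • μv - σ.mulVec η) :=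
        hwc.comp (f := fun η => (t + Δt, x + Δt • μv - σ.mulVec η)) (by fun_prop)
      unfold resErr
      fun_prop
    exact hcont.aestronglyMeasurable
  · have hsecond := abs_second_difference_le hdiff hlip' (t + Δt, x + Δt • μv) (0, σ.mulVec η)
    have hfirst := hlip (t + Δt, x + Δt • μv) (t, x)
    have hstep : ((t + Δt, x + Δt • μv) : ℝ × (Fin d → ℝ)) - (t, x) = Δt • ((1 : ℝ), μv) := by
      ext <;> simp
    rw [hstep, norm_smul, Real.norm_of_nonneg hpos.le, Real.norm_eq_abs] at hfirst
    simp only [hw, Function.uncurry_apply_pair, Prod.mk_add_mk, Prod.mk_sub_mk, add_zero,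
      sub_zero, Prod.norm_mk, norm_zero, norm_nonneg, sup_of_le_right] at hsecond hfirst
    have hsq : ‖σ.mulVec η‖ ^ 2 ≤ S ^ 2 * ‖η‖ ^ 2 := by
      rw [← mul_pow]
      exact pow_le_pow_left₀ (norm_nonneg _) (hS η) 2
    have hKsq := mul_le_mul_of_nonneg_left hsq hK0
    have hnum : |v (t + Δt) (x + Δt • μv + σ.mulVec η) + v (t + Δt) (x + Δt • μv - σ.mulVec η)
        - 2 * v t x| ≤ (L * ‖((1 : ℝ), μv)‖ + K * S ^ 2 * ‖η‖ ^ 2 / Δt) * (2 * Δt) := by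
      have hexp : (L * ‖((1 : ℝ), μv)‖ + K * S ^ 2 * ‖η‖ ^ 2 / Δt) * (2 * Δt)
          = 2 * (L * (Δt * ‖((1 : ℝ), μv)‖)) + 2 * (K * (S ^ 2 * ‖η‖ ^ 2)) := by
        field_simp
      rw [hexp, Prod.norm_mk]
      rw [abs_le] at hsecond hfirst ⊢
      constructor <;> linarith
    calc |resErr v μv σ t x Δt η| ≤ _ := abs_sub _ _
      _ ≤ (L * ‖((1 : ℝ), μv)‖ + K * S ^ 2 * ‖η‖ ^ 2 / Δt) + |c| := by
        rw [abs_div, abs_of_pos (by positivity : 0 < 2 * Δt)]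
        gcongr
        exact (div_le_iff₀ (by positivity)).mpr hnum
      _ = _ := by ring
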